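/- arXiv:2004.12686 — 4 statements merged into one kernel-verified Lean document; each statement's English description precedes it below -/
import Mathlib

section
/- Let ψ be a unit eigenvector of H_search with eigenvalue E ∈ ℝ such that E ≠ r·λ_i for every i, and set γ = ⟨w, ψ⟩. Then γ ≠ 0 and the normalization identity 1/|γ|² = Σ_{i=1}^{n} |a_i|²/(E − r·λ_i)² holds. -/
open Matrix BigOperators

/-!
Pairing `T ψ + ⟪w, ψ⟫ • w = E • ψ` with an eigenvector `b i` of the symmetric operator `T` gives
`(E - μ i) ⟪b i, ψ⟫ = ⟪w, ψ⟫ ⟪b i, w⟫`. Hence the Parseval sum of `‖ψ‖ ^ 2` is `‖⟪w, ψ⟫‖ ^ 2`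
times the sum of the `‖⟪b i, w⟫‖ ^ 2 / (E - μ i) ^ 2`.
-/

section InnerProductSpace

open scoped InnerProductSpace

variable {ι 𝕜 V : Type*} [RCLike 𝕜] [NormedAddCommGroup V] [InnerProductSpace 𝕜 V]

theorem hasSum_norm_inner_sq_of_hilbertBasis (b : HilbertBasis ι 𝕜 V) (x : V) :
    HasSum (fun i ↦ ‖⟪b i, x⟫_𝕜‖ ^ 2) (‖x‖ ^ 2) := by
  have hrepr := lp.hasSum_norm (p := 2) (by norm_num) (b.repr x)
  simpa [b.repr_apply_apply] using hrepr

theorem exists_hilbertBasis_eq_of_orthonormal_of_card_eq_finrank [Fintype ι]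
    [FiniteDimensional 𝕜 V] {v : ι → V} (hv : Orthonormal 𝕜 v)
    (hcard : Fintype.card ι = Module.finrank 𝕜 V) :
    ∃ b : HilbertBasis ι 𝕜 V, ⇑b = v := by
  have := FiniteDimensional.complete 𝕜 V
  have hspan := hv.linearIndependent.span_eq_top_of_card_eq_finrank' hcard
  exact ⟨(OrthonormalBasis.mk hv hspan.ge).toHilbertBasis, by simp⟩

variable {T : V →ₗ[𝕜] V} {w ψ : V}

theorem sub_mul_inner_eq_of_apply_add_inner_smul_eq_smul (hT : T.IsSymmetric) {v : V} {μ : ℝ}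
    (hv : T v = (μ : 𝕜) • v) {E : 𝕜} (hψ : T ψ + ⟪w, ψ⟫_𝕜 • w = E • ψ) :
    (E - μ) * ⟪v, ψ⟫_𝕜 = ⟪w, ψ⟫_𝕜 * ⟪v, w⟫_𝕜 := by
  have hTψ : ⟪v, T ψ⟫_𝕜 = μ * ⟪v, ψ⟫_𝕜 := by
    rw [← hT v ψ, hv, inner_smul_left, RCLike.conj_ofReal]
  have hpair : ⟪v, T ψ⟫_𝕜 + ⟪w, ψ⟫_𝕜 * ⟪v, w⟫_𝕜 = E * ⟪v, ψ⟫_𝕜 := by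
    rw [← inner_smul_right, ← inner_add_right, hψ, inner_smul_right]
  linear_combination hTψ - hpair

theorem norm_inner_sq_eq_div_mul_of_apply_add_inner_smul_eq_smul (hT : T.IsSymmetric) {v : V}
    {μ E : ℝ} (hv : T v = (μ : 𝕜) • v) (hψ : T ψ + ⟪w, ψ⟫_𝕜 • w = (E : 𝕜) • ψ) (hE : E ≠ μ) :
    ‖⟪v, ψ⟫_𝕜‖ ^ 2 = ‖⟪v, w⟫_𝕜‖ ^ 2 / (E - μ) ^ 2 * ‖⟪w, ψ⟫_𝕜‖ ^ 2 := by
  have hnormSq : (E - μ) ^ 2 * ‖⟪v, ψ⟫_𝕜‖ ^ 2 = ‖⟪w, ψ⟫_𝕜‖ ^ 2 * ‖⟪v, w⟫_𝕜‖ ^ 2 := by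
    have hcoord := sub_mul_inner_eq_of_apply_add_inner_smul_eq_smul hT hv hψ
    rw [← RCLike.ofReal_sub] at hcoord
    have hnorm := congrArg (fun z : 𝕜 ↦ ‖z‖ ^ 2) hcoord
    simpa only [norm_mul, RCLike.norm_ofReal, mul_pow, sq_abs] using hnorm
  have hgap : E - μ ≠ 0 := sub_ne_zero.mpr hE
  field_simp
  linear_combination hnormSq

theorem normalization_identity_of_unit_eigenvector_general (b : HilbertBasis ι 𝕜 V)
    (hT : T.IsSymmetric) {μ : ι → ℝ} (hb : ∀ i, T (b i) = (μ i : 𝕜) • b i) (hψ : ‖ψ‖ = 1) {E : ℝ}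
    (hEψ : T ψ + ⟪w, ψ⟫_𝕜 • w = (E : 𝕜) • ψ) (hE : ∀ i, E ≠ μ i) :
    ⟪w, ψ⟫_𝕜 ≠ 0 ∧ HasSum (fun i ↦ ‖⟪b i, w⟫_𝕜‖ ^ 2 / (E - μ i) ^ 2) (1 / ‖⟪w, ψ⟫_𝕜‖ ^ 2) := by
  have hcoord (i) := norm_inner_sq_eq_div_mul_of_apply_add_inner_smul_eq_smul hT (hb i) hEψ (hE i)
  have hparseval : HasSum (fun i ↦ ‖⟪b i, w⟫_𝕜‖ ^ 2 / (E - μ i) ^ 2 * ‖⟪w, ψ⟫_𝕜‖ ^ 2) 1 := by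
    simpa only [hcoord, hψ, one_pow] using hasSum_norm_inner_sq_of_hilbertBasis b ψ
  have hγ : ⟪w, ψ⟫_𝕜 ≠ 0 := by
    intro hzero
    simp only [hzero, norm_zero, ne_eq, two_ne_zero, not_false_eq_true, zero_pow, mul_zero]
      at hparseval
    exact one_ne_zero (hparseval.unique hasSum_zero)
  have hγsq : ‖⟪w, ψ⟫_𝕜‖ ^ 2 ≠ 0 := pow_ne_zero 2 (norm_ne_zero_iff.mpr hγ)
  refine ⟨hγ, (hasSum_mul_right_iff hγsq).mp ?_⟩
  rwa [one_div_mul_cancel hγsq]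

end InnerProductSpace

section EuclideanSpace

variable {ι 𝕜 : Type*} [Fintype ι] [RCLike 𝕜]

theorem inner_toLp_eq_star_dotProduct (x y : ι → 𝕜) :
    inner 𝕜 (WithLp.toLp 2 x) (WithLp.toLp 2 y) = star x ⬝ᵥ y := by
  rw [EuclideanSpace.inner_toLp_toLp, dotProduct_comm]

theorem norm_toLp_eq_one_of_star_dotProduct_self {x : ι → 𝕜} (hx : star x ⬝ᵥ x = 1) :
    ‖WithLp.toLp 2 x‖ = 1 := by
  rw [← inner_toLp_eq_star_dotProduct, inner_self_eq_norm_sq_to_K] at hx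
  exact (pow_eq_one_iff_of_nonneg (norm_nonneg _) two_ne_zero).mp (mod_cast hx)

theorem exists_hilbertBasis_eq_toLp_of_star_dotProduct_eq_ite [DecidableEq ι] {v : ι → ι → 𝕜}
    (hv : ∀ i j, star (v i) ⬝ᵥ v j = if i = j then 1 else 0) :
    ∃ b : HilbertBasis ι 𝕜 (EuclideanSpace 𝕜 ι), ⇑b = fun i ↦ WithLp.toLp 2 (v i) := by
  refine exists_hilbertBasis_eq_of_orthonormal_of_card_eq_finrank ?_ finrank_euclideanSpace.symm
  simpa only [orthonormal_iff_ite, inner_toLp_eq_star_dotProduct] using hv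

theorem toEuclideanLin_toLp_add_inner_smul_toLp [DecidableEq ι] (A : Matrix ι ι 𝕜) (w x : ι → 𝕜) :
    toEuclideanLin A (WithLp.toLp 2 x) +
        inner 𝕜 (WithLp.toLp 2 w) (WithLp.toLp 2 x) • WithLp.toLp 2 w =
      WithLp.toLp 2 ((A + vecMulVec w (star w)) *ᵥ x) := by
  rw [inner_toLp_eq_star_dotProduct, toLpLin_toLp, toLin'_apply, add_mulVec, vecMulVec_mulVec,
    op_smul_eq_smul, WithLp.toLp_add, WithLp.toLp_smul]

end EuclideanSpace

/-- Let `ψ` be a unit eigenvector of `H_search = r•H + |w⟩⟨w|` with real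
eigenvalue `E` such that `E ≠ r·λ i` for every `i`, and set `γ = ⟨w, ψ⟩`. Then `γ ≠ 0` and
`1/|γ|² = ∑ i, |a i|²/(E − r·λ i)²`. -/
theorem normalization_identity_of_unit_eigenvector
    (n : ℕ) (H : Matrix (Fin n) (Fin n) ℂ) (hH : H.IsHermitian)
    (v : Fin n → (Fin n → ℂ)) (lam : Fin n → ℝ) (hlam : Monotone lam)
    (hortho : ∀ i j, star (v i) ⬝ᵥ v j = if i = j then 1 else 0)
    (heig : ∀ i, H.mulVec (v i) = (lam i : ℂ) • v i)
    (w : Fin n → ℂ) (hw : star w ⬝ᵥ w = 1)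
    (a : Fin n → ℂ) (ha : ∀ i, a i = star (v i) ⬝ᵥ w)
    (r : ℝ)
    (Hs : Matrix (Fin n) (Fin n) ℂ)
    (hHs : Hs = (r : ℂ) • H + Matrix.vecMulVec w (star w))
    (ψ : Fin n → ℂ) (hψ : star ψ ⬝ᵥ ψ = 1)
    (E : ℝ) (heigψ : Hs.mulVec ψ = (E : ℂ) • ψ)
    (hE : ∀ i, E ≠ r * lam i) :
    star w ⬝ᵥ ψ ≠ 0 ∧
    1 / ‖star w ⬝ᵥ ψ‖ ^ 2 = ∑ i, ‖a i‖ ^ 2 / (E - r * lam i) ^ 2 := by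
  obtain ⟨b, hb⟩ := exists_hilbertBasis_eq_toLp_of_star_dotProduct_eq_ite hortho
  have hsymm : (toEuclideanLin ((r : ℂ) • H)).IsSymmetric :=
    isSymmetric_toEuclideanLin_iff.mpr (IsSelfAdjoint.smul (Complex.conj_ofReal r) hH)
  have hbEig (i) : toEuclideanLin ((r : ℂ) • H) (b i) = ((r * lam i : ℝ) : ℂ) • b i := by
    simp only [hb, toLpLin_toLp, toLin'_apply, smul_mulVec, heig, smul_smul, Complex.ofReal_mul,
      WithLp.toLp_smul]
  have hψEig := toEuclideanLin_toLp_add_inner_smul_toLp ((r : ℂ) • H) w ψ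
  rw [← hHs, heigψ, WithLp.toLp_smul] at hψEig
  have hunit := norm_toLp_eq_one_of_star_dotProduct_self hψ
  obtain ⟨hγ, hsum⟩ :=
    normalization_identity_of_unit_eigenvector_general b hsymm hbEig hunit hψEig hE
  simp only [hb, inner_toLp_eq_star_dotProduct, ← ha] at hγ hsum
  exact ⟨hγ, hsum.unique (hasSum_fintype _)⟩
end

section
/- Assume r > 0. Then H_search has at most one eigenvalue, counted with multiplicity, that is strictly greater than r·λ_n. Moreover, if the orthogonal projection of w onto the λ_n-eigenspace of H is nonzero, then H_search has exactly one eigenvalue strictly greater than r·λ_n, and this eigenvalue is simple. -/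
open Matrix BigOperators

/-!
On the span of the eigenspaces of a symmetric operator `S` for eigenvalues above `c`, the quadratic
form of `S` exceeds `c‖x‖²` at every `x ≠ 0`. If the quadratic form of `T` never exceeds `c‖x‖²` and
`S = T + B`, then this span meets `ker B` trivially, so its dimension is at most the rank of `B`.
Conversely, if `T u = c u` and `⟪u, w⟫ ≠ 0`, then the form of `T + |w⟩⟨w|` at `u` is
`c‖u‖² + |⟪w, u⟫|² > c‖u‖²`, which forces an eigenvalue above `c`.
-/

open Module Module.End InnerProductSpace

section Eigenspace

variable {R M N : Type*} [CommRing R] [AddCommGroup M] [Module R M] [AddCommGroup N] [Module R N]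

lemma map_eigenspace_eq_eigenspace_conj (e : M ≃ₗ[R] N) (T : End R M) (μ : R) :
    (eigenspace T μ).map (e : M →ₗ[R] N) = eigenspace (e.conj T) μ := by
  ext y
  rw [Submodule.mem_map_equiv, mem_eigenspace_iff, mem_eigenspace_iff, LinearEquiv.conj_apply_apply,
    ← e.symm.injective.eq_iff, map_smul, e.symm_apply_apply]

lemma exists_eq_of_hasEigenvalue_of_basis {ι : Type*} [Finite ι] [IsDomain R]
    {T : End R M} (b : Basis ι R M) {d : ι → R} (hb : ∀ i, T (b i) = d i • b i)
    {μ : R} (hμ : HasEigenvalue T μ) : ∃ i, d i = μ := by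
  classical
  have := Fintype.ofFinite ι
  have := Module.Free.of_basis b
  have hT : T = toLin b b (diagonal d) := b.ext fun i ↦ by
    simp [hb, toLin_self, diagonal_apply, ite_smul]
  rwa [hT, hasEigenvalue_toLin_diagonal_iff] at hμ

end Eigenspace

section EigenspaceAbove

variable {𝕜 E F : Type*} [RCLike 𝕜] [AddCommGroup E] [Module 𝕜 E] [AddCommGroup F] [Module 𝕜 F]

/-- The span of the eigenspaces of `T` for real eigenvalues strictly greater than `c`. For a
symmetric operator its dimension is the number of eigenvalues above `c`, counted with
multiplicity. -/
def eigenspaceAbove (T : End 𝕜 E) (c : ℝ) : Submodule 𝕜 E :=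
  ⨆ μ : {μ : ℝ // c < μ}, eigenspace T ((μ : ℝ) : 𝕜)

lemma finrank_eigenspaceAbove_conj (e : E ≃ₗ[𝕜] F) (T : End 𝕜 E) (c : ℝ) :
    finrank 𝕜 (eigenspaceAbove (e.conj T) c) = finrank 𝕜 (eigenspaceAbove T c) := by
  have hmap : eigenspaceAbove (e.conj T) c = (eigenspaceAbove T c).map (e : E →ₗ[𝕜] F) := by
    simp only [eigenspaceAbove, Submodule.map_iSup, map_eigenspace_eq_eigenspace_conj]
  rw [hmap, e.finrank_map_eq]

lemma eigenspaceAbove_ne_bot_of_hasEigenvalue {T : End 𝕜 E} {c μ : ℝ} (hcμ : c < μ)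
    (hμ : HasEigenvalue T (μ : 𝕜)) : eigenspaceAbove T c ≠ ⊥ :=
  ne_bot_of_le_ne_bot hμ
    (le_iSup (fun ν : {ν : ℝ // c < ν} ↦ eigenspace T ((ν : ℝ) : 𝕜)) ⟨μ, hcμ⟩)

end EigenspaceAbove

section Symmetric

variable {𝕜 E : Type*} [RCLike 𝕜] [NormedAddCommGroup E] [InnerProductSpace 𝕜 E]

lemma mul_norm_sq_lt_re_inner_of_mem_eigenspaceAbove {T : E →ₗ[𝕜] E} (hT : T.IsSymmetric) {c : ℝ}
    {x : E} (hx : x ∈ eigenspaceAbove T c) (hx0 : x ≠ 0) :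
    c * ‖x‖ ^ 2 < RCLike.re ⟪T x, x⟫_𝕜 := by
  classical
  obtain ⟨f, rfl⟩ := (Submodule.mem_iSup_iff_exists_dfinsupp' _ x).mp hx
  have horth := hT.orthogonalFamily_eigenspaces.comp
    (RCLike.ofReal_injective.comp (Subtype.val_injective (p := fun μ : ℝ ↦ c < μ)))
  have hnorm : ‖f.sum fun _ y ↦ (y : E)‖ ^ 2 = ∑ μ ∈ f.support, ‖f μ‖ ^ 2 :=
    horth.norm_sum f f.support
  have hTf : T (f.sum fun _ y ↦ (y : E)) =
      ∑ μ ∈ f.support, ((((μ : ℝ) : 𝕜) • f μ : eigenspace T ((μ : ℝ) : 𝕜)) : E) := by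
    rw [DFinsupp.sum, map_sum]
    exact Finset.sum_congr rfl fun μ _ ↦ mem_eigenspace_iff.mp (f μ).2
  have hform : RCLike.re ⟪T (f.sum fun _ y ↦ (y : E)), f.sum fun _ y ↦ (y : E)⟫_𝕜 =
      ∑ μ ∈ f.support, (μ : ℝ) * ‖f μ‖ ^ 2 := by
    rw [hTf]
    refine (congrArg RCLike.re (horth.inner_sum (fun μ ↦ ((μ : ℝ) : 𝕜) • f μ) f f.support)).trans ?_
    rw [map_sum]
    refine Finset.sum_congr rfl fun μ _ ↦ ?_
    rw [inner_smul_left, RCLike.conj_ofReal, RCLike.re_ofReal_mul, inner_self_eq_norm_sq]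
  have hsupp : f.support.Nonempty := by
    rw [Finset.nonempty_iff_ne_empty, ne_eq, DFinsupp.support_eq_empty]
    rintro rfl
    exact hx0 DFinsupp.sum_zero_index
  rw [hnorm, hform, Finset.mul_sum]
  refine Finset.sum_lt_sum_of_nonempty hsupp fun μ hμ ↦ mul_lt_mul_of_pos_right μ.2 ?_
  exact pow_pos (norm_pos_iff.mpr (DFinsupp.mem_support_iff.mp hμ)) 2

lemma finrank_eigenspaceAbove_add_le_finrank_range {T B : E →ₗ[𝕜] E}
    [FiniteDimensional 𝕜 (LinearMap.range B)] (hTB : (T + B).IsSymmetric) {c : ℝ}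
    (hT : ∀ x, RCLike.re ⟪T x, x⟫_𝕜 ≤ c * ‖x‖ ^ 2) :
    finrank 𝕜 (eigenspaceAbove (T + B) c) ≤ finrank 𝕜 (LinearMap.range B) := by
  have hinj : Function.Injective (B.rangeRestrict.domRestrict (eigenspaceAbove (T + B) c)) := by
    rw [injective_iff_map_eq_zero]
    intro x hBx
    by_contra hx0
    have hlt := mul_norm_sq_lt_re_inner_of_mem_eigenspaceAbove hTB x.2 (by simpa using hx0)
    have hBx' : B x = 0 := congrArg Subtype.val hBx
    rw [LinearMap.add_apply, hBx', add_zero] at hlt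
    exact hlt.not_ge (hT x)
  exact LinearMap.finrank_le_finrank_of_injective hinj

lemma range_rankOne_le_span_singleton (x y : E) :
    LinearMap.range (rankOne 𝕜 x y : E →ₗ[𝕜] E) ≤ 𝕜 ∙ x := by
  rintro _ ⟨z, rfl⟩
  exact Submodule.smul_mem _ _ (Submodule.mem_span_singleton_self x)

lemma finrank_eigenspaceAbove_add_rankOne_le_one {T : E →ₗ[𝕜] E} (hT : T.IsSymmetric) {c : ℝ}
    (hc : ∀ x, RCLike.re ⟪T x, x⟫_𝕜 ≤ c * ‖x‖ ^ 2) (w : E) :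
    finrank 𝕜 (eigenspaceAbove (T + (rankOne 𝕜 w w : E →ₗ[𝕜] E)) c) ≤ 1 := by
  have hrange := range_rankOne_le_span_singleton (𝕜 := 𝕜) w w
  have := Submodule.finiteDimensional_of_le hrange
  calc finrank 𝕜 (eigenspaceAbove (T + (rankOne 𝕜 w w : E →ₗ[𝕜] E)) c)
      ≤ finrank 𝕜 (LinearMap.range (rankOne 𝕜 w w : E →ₗ[𝕜] E)) :=
        finrank_eigenspaceAbove_add_le_finrank_range (hT.add (isSymmetric_rankOne_self w)) hc
    _ ≤ finrank 𝕜 (𝕜 ∙ w) := Submodule.finrank_mono hrange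
    _ ≤ 1 := (finrank_span_le_card {w}).trans_eq (by simp)

variable [FiniteDimensional 𝕜 E]

lemma re_inner_eq_sum_eigenvalues_mul {T : E →ₗ[𝕜] E} (hT : T.IsSymmetric) {n : ℕ}
    (hn : finrank 𝕜 E = n) (x : E) :
    RCLike.re ⟪T x, x⟫_𝕜 = ∑ i, hT.eigenvalues hn i * ‖⟪hT.eigenvectorBasis hn i, x⟫_𝕜‖ ^ 2 := by
  rw [hT, ← (hT.eigenvectorBasis hn).sum_inner_mul_inner, map_sum]
  refine Finset.sum_congr rfl fun i _ ↦ ?_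
  rw [← hT, hT.apply_eigenvectorBasis, inner_smul_left, RCLike.conj_ofReal, mul_left_comm,
    RCLike.re_ofReal_mul, ← inner_conj_symm x, RCLike.conj_mul, ← RCLike.ofReal_pow,
    RCLike.ofReal_re]

lemma re_inner_le_of_forall_hasEigenvalue_le {T : E →ₗ[𝕜] E} (hT : T.IsSymmetric) {c : ℝ}
    (hc : ∀ μ : ℝ, HasEigenvalue T (μ : 𝕜) → μ ≤ c) (x : E) :
    RCLike.re ⟪T x, x⟫_𝕜 ≤ c * ‖x‖ ^ 2 := by
  rw [re_inner_eq_sum_eigenvalues_mul hT rfl, ← (hT.eigenvectorBasis rfl).sum_sq_norm_inner_right x,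
    Finset.mul_sum]
  gcongr with i
  exact hc _ (hT.hasEigenvalue_eigenvalues rfl i)

lemma eigenspaceAbove_ne_bot_of_lt_re_inner {T : E →ₗ[𝕜] E} (hT : T.IsSymmetric) {c : ℝ} {x : E}
    (hx : c * ‖x‖ ^ 2 < RCLike.re ⟪T x, x⟫_𝕜) : eigenspaceAbove T c ≠ ⊥ := by
  contrapose! hx
  refine re_inner_le_of_forall_hasEigenvalue_le hT (fun μ hμ ↦ ?_) x
  by_contra! hcμ
  exact eigenspaceAbove_ne_bot_of_hasEigenvalue hcμ hμ hx

lemma eigenspaceAbove_add_rankOne_ne_bot {T : E →ₗ[𝕜] E} (hT : T.IsSymmetric) {c : ℝ} {u w : E}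
    (hu : T u = (c : 𝕜) • u) (huw : ⟪u, w⟫_𝕜 ≠ 0) :
    eigenspaceAbove (T + (rankOne 𝕜 w w : E →ₗ[𝕜] E)) c ≠ ⊥ := by
  have hform : RCLike.re ⟪(T + (rankOne 𝕜 w w : E →ₗ[𝕜] E)) u, u⟫_𝕜 =
      c * ‖u‖ ^ 2 + ‖⟪u, w⟫_𝕜‖ ^ 2 := by
    rw [LinearMap.add_apply, ContinuousLinearMap.coe_coe, rankOne_apply, hu, inner_add_left,
      inner_smul_left, inner_smul_left, RCLike.conj_ofReal, map_add, RCLike.re_ofReal_mul,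
      inner_self_eq_norm_sq, inner_conj_symm, ← inner_conj_symm w, RCLike.mul_conj,
      ← RCLike.ofReal_pow, RCLike.ofReal_re]
  refine eigenspaceAbove_ne_bot_of_lt_re_inner (hT.add (isSymmetric_rankOne_self w)) (x := u) ?_
  rw [hform]
  exact lt_add_of_pos_right _ (pow_pos (norm_pos_iff.mpr huw) 2)

end Symmetric

section Matrix

variable {𝕜 ι : Type*} [RCLike 𝕜] [Fintype ι]

lemma linearIndependent_of_star_dotProduct_eq_ite {κ : Type*} [DecidableEq κ] {v : κ → ι → 𝕜}
    (hv : ∀ i j, star (v i) ⬝ᵥ v j = if i = j then 1 else 0) : LinearIndependent 𝕜 v := by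
  have horth : Orthonormal 𝕜 fun i ↦ WithLp.toLp 2 (v i) := by
    rw [orthonormal_iff_ite]
    intro i j
    rw [EuclideanSpace.inner_toLp_toLp, dotProduct_comm, hv]
  exact horth.linearIndependent.map' (WithLp.linearEquiv 2 𝕜 (ι → 𝕜)).toLinearMap
    (LinearEquiv.ker _)

variable [DecidableEq ι]

lemma exists_eq_of_hasEigenvalue_of_star_dotProduct_eq_ite {H : Matrix ι ι 𝕜} {v : ι → ι → 𝕜}
    {lam : ι → ℝ} (hv : ∀ i j, star (v i) ⬝ᵥ v j = if i = j then 1 else 0)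
    (heig : ∀ i, H *ᵥ v i = (lam i : 𝕜) • v i) {μ : ℝ} (hμ : HasEigenvalue (toLin' H) (μ : 𝕜)) :
    ∃ i, lam i = μ := by
  have hli := linearIndependent_of_star_dotProduct_eq_ite hv
  have hspan : Submodule.span 𝕜 (Set.range v) = ⊤ := hli.span_eq_top_of_card_eq_finrank' (by simp)
  obtain ⟨i, hi⟩ := exists_eq_of_hasEigenvalue_of_basis (Basis.mk hli hspan.ge)
    (fun i ↦ by rw [Basis.mk_apply, toLin'_apply, heig]) hμ
  exact ⟨i, RCLike.ofReal_injective hi⟩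

lemma toEuclideanLin_vecMulVec_star {κ : Type*} [Fintype κ] (x : κ → 𝕜) (y : ι → 𝕜) :
    toEuclideanLin (vecMulVec x (star y)) = rankOne 𝕜 (WithLp.toLp 2 x) (WithLp.toLp 2 y) := by
  rw [← LinearEquiv.eq_symm_apply, symm_toEuclideanLin_rankOne]

lemma finrank_eigenspaceAbove_toLin' (A : Matrix ι ι 𝕜) (c : ℝ) :
    finrank 𝕜 (eigenspaceAbove (toLin' A) c) = finrank 𝕜 (eigenspaceAbove (toEuclideanLin A) c) :=
  finrank_eigenspaceAbove_conj (WithLp.linearEquiv 2 𝕜 (ι → 𝕜)) (toEuclideanLin A) c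

theorem at_most_one_eigenvalue_above_top_general {H : Matrix ι ι 𝕜} (hH : H.IsHermitian) {Λ : ℝ}
    (hΛ : ∀ μ : ℝ, HasEigenvalue (toLin' H) (μ : 𝕜) → μ ≤ Λ) (w : ι → 𝕜) {r : ℝ} (hr : 0 ≤ r) :
    finrank 𝕜 (eigenspaceAbove (toLin' ((r : 𝕜) • H + vecMulVec w (star w))) (r * Λ)) ≤ 1 ∧
    ((∃ u : ι → 𝕜, H *ᵥ u = (Λ : 𝕜) • u ∧ star u ⬝ᵥ w ≠ 0) →
      finrank 𝕜 (eigenspaceAbove (toLin' ((r : 𝕜) • H + vecMulVec w (star w))) (r * Λ)) = 1) := by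
  set T := toEuclideanLin H
  have hT : T.IsSymmetric := isSymmetric_toEuclideanLin_iff.mpr hH
  have hrT : ((r : 𝕜) • T).IsSymmetric := hT.smul (RCLike.conj_ofReal r)
  have hform (x) : RCLike.re ⟪((r : 𝕜) • T) x, x⟫_𝕜 ≤ r * Λ * ‖x‖ ^ 2 := by
    rw [LinearMap.smul_apply, inner_smul_left, RCLike.conj_ofReal, RCLike.re_ofReal_mul, mul_assoc]
    gcongr
    refine re_inner_le_of_forall_hasEigenvalue_le hT (fun μ hμ ↦ hΛ μ ?_) x
    rwa [hasEigenvalue_iff_mem_spectrum, spectrum_toLin', ← spectrum_toLpLin 2,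
      ← hasEigenvalue_iff_mem_spectrum]
  rw [finrank_eigenspaceAbove_toLin', map_add, map_smul, toEuclideanLin_vecMulVec_star]
  have hle := finrank_eigenspaceAbove_add_rankOne_le_one hrT hform (WithLp.toLp 2 w)
  refine ⟨hle, fun ⟨u, hu, huw⟩ ↦ hle.antisymm ?_⟩
  rw [Submodule.one_le_finrank_iff]
  refine eigenspaceAbove_add_rankOne_ne_bot hrT (u := WithLp.toLp 2 u) ?_ ?_
  · rw [LinearMap.smul_apply, toLpLin_toLp, toLin'_apply, hu, WithLp.toLp_smul, smul_smul,
      RCLike.ofReal_mul]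
  · rwa [EuclideanSpace.inner_toLp_toLp, dotProduct_comm]

end Matrix

/-- If `r > 0`, then `H_search = r•H + |w⟩⟨w|` has at most one eigenvalue,
counted with multiplicity, strictly greater than `r·λ_n` (the sum of the corresponding
eigenspaces has dimension at most 1). Moreover, if the orthogonal projection of `w` onto the
`λ_n`-eigenspace of `H` is nonzero (i.e. some `λ_n`-eigenvector of `H` is not orthogonal to
`w`), then this dimension is exactly 1: there is exactly one such eigenvalue and it is simple. -/
theorem at_most_one_eigenvalue_above_top
    (n : ℕ) (H : Matrix (Fin (n + 1)) (Fin (n + 1)) ℂ) (hH : H.IsHermitian)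
    (v : Fin (n + 1) → (Fin (n + 1) → ℂ)) (lam : Fin (n + 1) → ℝ)
    (hlam : Monotone lam)
    (hortho : ∀ i j, star (v i) ⬝ᵥ v j = if i = j then 1 else 0)
    (heig : ∀ i, H.mulVec (v i) = (lam i : ℂ) • v i)
    (w : Fin (n + 1) → ℂ) (hw : star w ⬝ᵥ w = 1)
    (r : ℝ) (hr : 0 < r)
    (Hs : Matrix (Fin (n + 1)) (Fin (n + 1)) ℂ)
    (hHs : Hs = (r : ℂ) • H + Matrix.vecMulVec w (star w)) :
    Module.finrank ℂ
      ↥(⨆ μ : {μ : ℝ // r * lam (Fin.last n) < μ},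
          Module.End.eigenspace (Matrix.toLin' Hs) ((μ : ℝ) : ℂ)) ≤ 1 ∧
    ((∃ u : Fin (n + 1) → ℂ,
        H.mulVec u = (lam (Fin.last n) : ℂ) • u ∧ star u ⬝ᵥ w ≠ 0) →
      Module.finrank ℂ
        ↥(⨆ μ : {μ : ℝ // r * lam (Fin.last n) < μ},
            Module.End.eigenspace (Matrix.toLin' Hs) ((μ : ℝ) : ℂ)) = 1) := by
  subst hHs
  refine at_most_one_eigenvalue_above_top_general hH (fun μ hμ ↦ ?_) w hr.le
  obtain ⟨i, rfl⟩ := exists_eq_of_hasEigenvalue_of_star_dotProduct_eq_ite hortho heig hμ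
  exact hlam i.le_last
end

section
/- Assume λ_n = 1, a_n ≠ 0 with ε = |a_n|² < 1, and that H_search admits an orthonormal eigenbasis ψ_1,…,ψ_n with real eigenvalues E_1,…,E_n such that E_α ≠ r·λ_i for all α and i. If r > S_1, then for every t ∈ ℝ, |⟨w, exp(−i t H_search) v_n⟩| ≤ 2√ε·r/(r − S_1). -/
open Matrix BigOperators

/-!
Let `A` be Hermitian with a simple top eigenvalue `m`, `A u = m u`, and let `x` be a unit
eigenvector of `A + |w⟩⟨w|` with eigenvalue `e`. Pairing the eigenvalue equation with `u` gives
`⟪w, x⟫ ⟪x, u⟫ = ⟪w, u⟫ s` with `s = |⟪w, x⟫|² / (e - m)` real. Over an orthonormal eigenbasis the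
`s` add up to `1`, and time evolution only multiplies each of them by a phase, so the amplitude is
at most `|⟪w, u⟫| ∑ |s|`. A positive `s` needs `e > m`. Above `m`, the vector `x` is a multiple of
`(e - A)⁻¹ w`, and two such vectors with positive coefficients are never orthogonal: at most one `s`
is positive. The secular equation `⟪w, (e - A)⁻¹ w⟫ = 1`, in which replacing `e` by `m` off `u` only
increases the terms, bounds that `s` by `1 / (1 - G)`, where `G` is the sum of
`|⟪vᵢ, w⟫|² / (m - μᵢ)` over the other eigenpairs `(vᵢ, μᵢ)` of `A`. Hence
`∑ |s| ≤ 2 / (1 - G) - 1`. For `A = r H` one has `G = S₁ / r`.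
-/

open InnerProductSpace (rankOne)
open scoped InnerProductSpace

theorem sum_abs_le_of_subsingleton_pos {ι : Type*} {s : Finset ι} {x : ι → ℝ} {K : ℝ}
    (hK : 0 ≤ K) (hle : ∀ i ∈ s, x i ≤ K) (hpos : {i | i ∈ s ∧ 0 < x i}.Subsingleton) :
    ∑ i ∈ s, |x i| ≤ 2 * K - ∑ i ∈ s, x i := by
  have habs (i : ι) : |x i| = 2 * (x i)⁺ - x i := by
    linarith [posPart_add_negPart (x i), posPart_sub_negPart (x i)]
  have hsum : ∑ i ∈ s, (x i)⁺ ≤ K := by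
    by_cases h : ∃ i ∈ s, 0 < x i
    · obtain ⟨i, his, hi⟩ := h
      rw [Finset.sum_eq_single_of_mem i his fun j hjs hj =>
        posPart_eq_zero.2 (not_lt.1 fun hj0 => hj (hpos ⟨hjs, hj0⟩ ⟨his, hi⟩))]
      exact sup_le (hle i his) hK
    · push Not at h
      rwa [Finset.sum_eq_zero fun i hi => posPart_eq_zero.2 (h i hi)]
  simp only [habs, Finset.sum_sub_distrib, ← Finset.mul_sum]
  linarith

theorem sum_compl_singleton_last {M : Type*} [AddCommMonoid M] {n : ℕ} (f : Fin (n + 1) → M) :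
    ∑ i ∈ {Fin.last n}ᶜ, f i = ∑ i : Fin n, f i.castSucc := by
  refine Eq.trans ?_ (Finset.sum_map Finset.univ Fin.castSuccEmb f)
  congr 1
  ext i
  simp [Fin.exists_castSucc_eq]

section Exponential

theorem exp_apply_of_apply_eq_smul {𝕜 E : Type*} [RCLike 𝕜] [NormedAddCommGroup E]
    [NormedSpace 𝕜 E] [CompleteSpace E] {A : E →L[𝕜] E} {x : E} {m : 𝕜} (hx : A x = m • x) :
    NormedSpace.exp A x = NormedSpace.exp m • x := by
  have hpow (n : ℕ) : (A ^ n) x = m ^ n • x := by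
    induction n with
    | zero => simp
    | succ n ih => rw [pow_succ, mul_apply_eq_comp, hx, map_smul, ih, smul_smul, pow_succ']
  have hA := (NormedSpace.exp_series_hasSum_exp' (𝕂 := 𝕜) A).mapL (ContinuousLinearMap.apply 𝕜 E x)
  have hm := (NormedSpace.exp_series_hasSum_exp' (𝕂 := 𝕜) m).smul_const x
  exact hA.unique (by simpa [hpow, smul_smul] using hm)

theorem norm_inner_exp_smul_apply_le {E ι : Type*} [NormedAddCommGroup E] [InnerProductSpace ℂ E]
    [Fintype ι] (ψ : OrthonormalBasis ι ℂ E) {A : E →L[ℂ] E} {e : ι → ℝ}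
    (hψ : ∀ i, A (ψ i) = (e i : ℂ) • ψ i) (x y : E) (t : ℝ) :
    ‖⟪x, NormedSpace.exp ((-(Complex.I * t)) • A) y⟫_ℂ‖ ≤ ∑ i, ‖⟪x, ψ i⟫_ℂ * ⟪ψ i, y⟫_ℂ‖ := by
  have := ψ.toBasis.finiteDimensional_of_finite
  have := FiniteDimensional.complete ℂ E
  have hexp (i : ι) : NormedSpace.exp ((-(Complex.I * t)) • A) (ψ i) =
      Complex.exp (Complex.I * (-(t * e i) : ℝ)) • ψ i := by
    rw [Complex.exp_eq_exp_ℂ]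
    refine exp_apply_of_apply_eq_smul ?_
    rw [_root_.smul_apply, hψ, smul_smul]
    push_cast
    ring_nf
  have hexpand : ⟪x, NormedSpace.exp ((-(Complex.I * t)) • A) y⟫_ℂ =
      ∑ i, Complex.exp (Complex.I * (-(t * e i) : ℝ)) * (⟪x, ψ i⟫_ℂ * ⟪ψ i, y⟫_ℂ) := by
    conv_lhs => rw [← ψ.sum_repr' y]
    simp only [map_sum, map_smul, hexp, inner_sum, inner_smul_right]
    exact Finset.sum_congr rfl fun i _ => by ring
  rw [hexpand]
  refine (norm_sum_le _ _).trans_eq (Finset.sum_congr rfl fun i _ => ?_)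
  rw [norm_mul, Complex.norm_exp_I_mul_ofReal, one_mul]

end Exponential

section RankOnePerturbation

variable {𝕜 E ι κ : Type*} [RCLike 𝕜] [NormedAddCommGroup E] [InnerProductSpace 𝕜 E]
  {A : E →L[𝕜] E} {w u x y : E} {m e f : ℝ}

theorem sub_mul_inner_of_add_rankOne_apply (hA : A.IsSymmetric) (hu : A u = (m : 𝕜) • u)
    (hx : (A + rankOne 𝕜 w w) x = (e : 𝕜) • x) :
    ((e - m : ℝ) : 𝕜) * ⟪u, x⟫_𝕜 = ⟪u, w⟫_𝕜 * ⟪w, x⟫_𝕜 := by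
  have hAx : ⟪u, A x⟫_𝕜 = m * ⟪u, x⟫_𝕜 := by
    rw [← ContinuousLinearMap.coe_coe, ← hA u x, ContinuousLinearMap.coe_coe, hu, inner_smul_left,
      RCLike.conj_ofReal]
  have heig := congrArg (inner 𝕜 u) hx
  rw [_root_.add_apply, inner_add_right, hAx, InnerProductSpace.inner_right_rankOne_apply,
    inner_smul_right] at heig
  push_cast
  linear_combination -heig

theorem inner_eq_div_of_add_rankOne_apply (hA : A.IsSymmetric) (hu : A u = (m : 𝕜) • u)
    (hx : (A + rankOne 𝕜 w w) x = (e : 𝕜) • x) (hne : e ≠ m) :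
    ⟪u, x⟫_𝕜 = ⟪u, w⟫_𝕜 * ⟪w, x⟫_𝕜 / ((e - m : ℝ) : 𝕜) := by
  rw [eq_div_iff (RCLike.ofReal_ne_zero.2 (sub_ne_zero.2 hne)), mul_comm]
  exact sub_mul_inner_of_add_rankOne_apply hA hu hx

variable (𝕜) in
/-- The share of the overlap `⟪w, u⟫` carried by an eigenvector `x` of `A + |w⟩⟨w|` with eigenvalue
`e`, where `u` is an eigenvector of `A` with eigenvalue `m`: the real number `s` such that
`⟪w, x⟫ * ⟪x, u⟫ = ⟪w, u⟫ * s`. For `e = m` the convention `_ / 0 = 0` gives the right value, since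
then `w` is orthogonal to `x` or to `u`. -/
noncomputable def overlapShare (w x : E) (e m : ℝ) : ℝ :=
  ‖⟪w, x⟫_𝕜‖ ^ 2 / (e - m)

theorem overlapShare_nonpos (h : e ≤ m) : overlapShare 𝕜 w x e m ≤ 0 :=
  div_nonpos_of_nonneg_of_nonpos (sq_nonneg _) (sub_nonpos.2 h)

theorem lt_of_overlapShare_pos (h : 0 < overlapShare 𝕜 w x e m) : m < e :=
  not_le.1 fun hem => h.not_ge (overlapShare_nonpos hem)

theorem inner_ne_zero_of_overlapShare_pos (h : 0 < overlapShare 𝕜 w x e m) : ⟪w, x⟫_𝕜 ≠ 0 := by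
  intro hwx
  simp [overlapShare, hwx] at h

theorem inner_mul_inner_eq_mul_overlapShare (hA : A.IsSymmetric) (hu : A u = (m : 𝕜) • u)
    (hx : (A + rankOne 𝕜 w w) x = (e : 𝕜) • x) (huw : ⟪u, w⟫_𝕜 ≠ 0) :
    ⟪w, x⟫_𝕜 * ⟪x, u⟫_𝕜 = ⟪w, u⟫_𝕜 * (overlapShare 𝕜 w x e m : 𝕜) := by
  rcases eq_or_ne e m with rfl | hne
  · have hwx : ⟪w, x⟫_𝕜 = 0 := by
      simpa [huw] using sub_mul_inner_of_add_rankOne_apply hA hu hx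
    simp [overlapShare, hwx]
  · rw [← inner_conj_symm x u, inner_eq_div_of_add_rankOne_apply hA hu hx hne, map_div₀, map_mul,
      RCLike.conj_ofReal, inner_conj_symm, overlapShare, RCLike.ofReal_div, RCLike.ofReal_pow,
      ← RCLike.mul_conj]
    ring

theorem sum_overlapShare_eq_one [Fintype κ] (ψ : OrthonormalBasis κ 𝕜 E) {e : κ → ℝ}
    (hA : A.IsSymmetric) (hψ : ∀ α, (A + rankOne 𝕜 w w) (ψ α) = (e α : 𝕜) • ψ α)
    (hu : A u = (m : 𝕜) • u) (huw : ⟪u, w⟫_𝕜 ≠ 0) :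
    ∑ α, overlapShare 𝕜 w (ψ α) (e α) m = 1 := by
  have hexpand : ⟪w, u⟫_𝕜 * ((∑ α, overlapShare 𝕜 w (ψ α) (e α) m : ℝ) : 𝕜) = ⟪w, u⟫_𝕜 := by
    conv_rhs => rw [← ψ.sum_inner_mul_inner]
    rw [RCLike.ofReal_sum, Finset.mul_sum]
    exact Finset.sum_congr rfl fun α _ =>
      (inner_mul_inner_eq_mul_overlapShare hA hu (hψ α) huw).symm
  exact_mod_cast
    mul_left_cancel₀ (inner_eq_zero_symm.not.1 huw) (hexpand.trans (mul_one _).symm)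

variable [Fintype ι] (b : OrthonormalBasis ι 𝕜 E) {μ : ι → ℝ}

theorem isSymmetric_of_apply_eq_ofReal_smul (hb : ∀ i, A (b i) = (μ i : 𝕜) • b i) :
    A.IsSymmetric := by
  have hexpand (z : E) : A z = ∑ i, ⟪b i, z⟫_𝕜 • (μ i : 𝕜) • b i := by
    conv_lhs => rw [← b.sum_repr' z]
    simp only [map_sum, map_smul, hb]
  intro x y
  simp only [ContinuousLinearMap.coe_coe, hexpand, sum_inner, inner_sum, inner_smul_left,
    inner_smul_right, inner_conj_symm, RCLike.conj_ofReal]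
  exact Finset.sum_congr rfl fun i _ => by ring

theorem inner_of_add_rankOne_apply (hb : ∀ i, A (b i) = (μ i : 𝕜) • b i)
    (hx : (A + rankOne 𝕜 w w) x = (e : 𝕜) • x) (hy : (A + rankOne 𝕜 w w) y = (f : 𝕜) • y)
    (he : ∀ i, e ≠ μ i) (hf : ∀ i, f ≠ μ i) :
    ⟪x, y⟫_𝕜 = ⟪x, w⟫_𝕜 * ⟪w, y⟫_𝕜 *
      ((∑ i, ‖⟪b i, w⟫_𝕜‖ ^ 2 / ((e - μ i) * (f - μ i)) : ℝ) : 𝕜) := by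
  have hA : A.IsSymmetric := isSymmetric_of_apply_eq_ofReal_smul b hb
  rw [← b.sum_inner_mul_inner, RCLike.ofReal_sum, Finset.mul_sum]
  refine Finset.sum_congr rfl fun i _ => ?_
  rw [← inner_conj_symm x (b i), inner_eq_div_of_add_rankOne_apply hA (hb i) hx (he i),
    inner_eq_div_of_add_rankOne_apply hA (hb i) hy (hf i), map_div₀, map_mul, RCLike.conj_ofReal,
    inner_conj_symm x w, RCLike.ofReal_div, RCLike.ofReal_pow, ← RCLike.conj_mul,
    RCLike.ofReal_mul]
  ring

theorem inner_ne_zero_of_add_rankOne_apply (hb : ∀ i, A (b i) = (μ i : 𝕜) • b i)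
    (hx : (A + rankOne 𝕜 w w) x = (e : 𝕜) • x) (hy : (A + rankOne 𝕜 w w) y = (f : 𝕜) • y)
    (he : ∀ i, μ i < e) (hf : ∀ i, μ i < f) (hwx : ⟪w, x⟫_𝕜 ≠ 0) (hwy : ⟪w, y⟫_𝕜 ≠ 0) :
    ⟪x, y⟫_𝕜 ≠ 0 := by
  have hden (i : ι) : 0 < (e - μ i) * (f - μ i) := mul_pos (sub_pos.2 (he i)) (sub_pos.2 (hf i))
  obtain ⟨j, hj⟩ : ∃ j, ⟪b j, w⟫_𝕜 ≠ 0 := by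
    by_contra! h
    exact hwx (by rw [← b.sum_repr' w]; simp [h])
  have hsum : 0 < ∑ i, ‖⟪b i, w⟫_𝕜‖ ^ 2 / ((e - μ i) * (f - μ i)) :=
    Finset.sum_pos' (fun i _ => div_nonneg (sq_nonneg _) (hden i).le)
      ⟨j, Finset.mem_univ j, div_pos (by positivity) (hden j)⟩
  rw [inner_of_add_rankOne_apply b hb hx hy (fun i => (he i).ne') (fun i => (hf i).ne')]
  exact mul_ne_zero (mul_ne_zero (inner_eq_zero_symm.not.1 hwx) hwy)
    (RCLike.ofReal_ne_zero.2 hsum.ne')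

theorem subsingleton_setOf_overlapShare_pos {ψ : κ → E} (hψo : Orthonormal 𝕜 ψ) {e : κ → ℝ}
    (hb : ∀ i, A (b i) = (μ i : 𝕜) • b i)
    (hψ : ∀ α, (A + rankOne 𝕜 w w) (ψ α) = (e α : 𝕜) • ψ α) (hm : ∀ i, μ i ≤ m) :
    {α | 0 < overlapShare 𝕜 w (ψ α) (e α) m}.Subsingleton := by
  intro α hα β hβ
  by_contra hαβ
  exact inner_ne_zero_of_add_rankOne_apply b hb (hψ α) (hψ β)
    (fun i => (hm i).trans_lt (lt_of_overlapShare_pos hα))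
    (fun i => (hm i).trans_lt (lt_of_overlapShare_pos hβ))
    (inner_ne_zero_of_overlapShare_pos hα) (inner_ne_zero_of_overlapShare_pos hβ) (hψo.2 hαβ)

theorem secular_equation_of_add_rankOne_apply (hb : ∀ i, A (b i) = (μ i : 𝕜) • b i)
    (hx : (A + rankOne 𝕜 w w) x = (e : 𝕜) • x)
    (he : ∀ i, e ≠ μ i) (hwx : ⟪w, x⟫_𝕜 ≠ 0) :
    ∑ i, ‖⟪b i, w⟫_𝕜‖ ^ 2 / (e - μ i) = 1 := by
  have hA : A.IsSymmetric := isSymmetric_of_apply_eq_ofReal_smul b hb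
  have hexpand : ⟪w, x⟫_𝕜 * ((∑ i, ‖⟪b i, w⟫_𝕜‖ ^ 2 / (e - μ i) : ℝ) : 𝕜) = ⟪w, x⟫_𝕜 := by
    conv_rhs => rw [← b.sum_inner_mul_inner]
    rw [RCLike.ofReal_sum, Finset.mul_sum]
    refine Finset.sum_congr rfl fun i _ => ?_
    rw [inner_eq_div_of_add_rankOne_apply hA (hb i) hx (he i), RCLike.ofReal_div,
      RCLike.ofReal_pow, ← RCLike.conj_mul, inner_conj_symm]
    ring
  exact_mod_cast mul_left_cancel₀ hwx (hexpand.trans (mul_one _).symm)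

variable [DecidableEq ι] {k : ι} {G : ℝ}

theorem one_sub_le_norm_inner_sq_div_sub (hb : ∀ i, A (b i) = (μ i : 𝕜) • b i)
    (hx : (A + rankOne 𝕜 w w) x = (e : 𝕜) • x)
    (hk : ∀ i, i ≠ k → μ i < μ k) (he : μ k < e) (hwx : ⟪w, x⟫_𝕜 ≠ 0)
    (hG : G = ∑ i ∈ {k}ᶜ, ‖⟪b i, w⟫_𝕜‖ ^ 2 / (μ k - μ i)) :
    1 - G ≤ ‖⟪b k, w⟫_𝕜‖ ^ 2 / (e - μ k) := by
  have hne (i : ι) : e ≠ μ i := by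
    rcases eq_or_ne i k with rfl | hi
    exacts [he.ne', ((hk i hi).trans he).ne']
  rw [← secular_equation_of_add_rankOne_apply b hb hx hne hwx,
    Fintype.sum_eq_add_sum_compl k, add_sub_assoc, hG]
  refine add_le_of_nonpos_right (sub_nonpos.2 (Finset.sum_le_sum fun i hi => ?_))
  have hgap : 0 < μ k - μ i := sub_pos.2 (hk i (by simpa using hi))
  gcongr

theorem norm_inner_mul_norm_inner_le_sub (hA : A.IsSymmetric) (hu : A u = (m : 𝕜) • u)
    (hu1 : ‖u‖ = 1) (hx : (A + rankOne 𝕜 w w) x = (e : 𝕜) • x) (hx1 : ‖x‖ = 1) (he : m ≤ e) :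
    ‖⟪u, w⟫_𝕜‖ * ‖⟪w, x⟫_𝕜‖ ≤ e - m := by
  have hux : ‖⟪u, x⟫_𝕜‖ ≤ 1 := by
    simpa [hu1, hx1] using norm_inner_le_norm (𝕜 := 𝕜) u x
  rw [← norm_mul, ← sub_mul_inner_of_add_rankOne_apply hA hu hx, norm_mul,
    RCLike.norm_ofReal, abs_of_nonneg (sub_nonneg.2 he)]
  exact mul_le_of_le_one_right (sub_nonneg.2 he) hux

theorem overlapShare_le (hb : ∀ i, A (b i) = (μ i : 𝕜) • b i)
    (hx : (A + rankOne 𝕜 w w) x = (e : 𝕜) • x) (hx1 : ‖x‖ = 1) (hk : ∀ i, i ≠ k → μ i < μ k)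
    (hG : G = ∑ i ∈ {k}ᶜ, ‖⟪b i, w⟫_𝕜‖ ^ 2 / (μ k - μ i)) (hG1 : G < 1) :
    overlapShare 𝕜 w x e (μ k) ≤ (1 - G)⁻¹ := by
  have hG0 : 0 < 1 - G := sub_pos.2 hG1
  rcases le_or_gt (overlapShare 𝕜 w x e (μ k)) 0 with hshare | hshare
  · exact hshare.trans (inv_nonneg.2 hG0.le)
  have he : μ k < e := lt_of_overlapShare_pos hshare
  have hpos : 0 < e - μ k := sub_pos.2 he
  have hwx : ⟪w, x⟫_𝕜 ≠ 0 := inner_ne_zero_of_overlapShare_pos hshare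
  rw [le_inv_comm₀ hshare hG0, overlapShare, inv_div]
  calc 1 - G ≤ ‖⟪b k, w⟫_𝕜‖ ^ 2 / (e - μ k) :=
        one_sub_le_norm_inner_sq_div_sub b hb hx hk he hwx hG
    _ = (‖⟪b k, w⟫_𝕜‖ * ‖⟪w, x⟫_𝕜‖) ^ 2 / ((e - μ k) * ‖⟪w, x⟫_𝕜‖ ^ 2) := by field_simp
    _ ≤ (e - μ k) ^ 2 / ((e - μ k) * ‖⟪w, x⟫_𝕜‖ ^ 2) := by
        gcongr
        exact norm_inner_mul_norm_inner_le_sub (isSymmetric_of_apply_eq_ofReal_smul b hb) (hb k)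
          (b.norm_eq_one k) hx hx1 he.le
    _ = (e - μ k) / ‖⟪w, x⟫_𝕜‖ ^ 2 := by field_simp

theorem sum_norm_inner_mul_inner_le [Fintype κ] (ψ : OrthonormalBasis κ 𝕜 E) {e : κ → ℝ}
    (hb : ∀ i, A (b i) = (μ i : 𝕜) • b i)
    (hψ : ∀ α, (A + rankOne 𝕜 w w) (ψ α) = (e α : 𝕜) • ψ α)
    (hk : ∀ i, i ≠ k → μ i < μ k) (hkw : ⟪b k, w⟫_𝕜 ≠ 0)
    (hG : G = ∑ i ∈ {k}ᶜ, ‖⟪b i, w⟫_𝕜‖ ^ 2 / (μ k - μ i)) (hG1 : G < 1) :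
    ∑ α, ‖⟪w, ψ α⟫_𝕜 * ⟪ψ α, b k⟫_𝕜‖ ≤ ‖⟪b k, w⟫_𝕜‖ * ((1 + G) / (1 - G)) := by
  have hA : A.IsSymmetric := isSymmetric_of_apply_eq_ofReal_smul b hb
  have hle (i : ι) : μ i ≤ μ k := by
    rcases eq_or_ne i k with rfl | hi
    exacts [le_rfl, (hk i hi).le]
  have hG0 : 0 < 1 - G := sub_pos.2 hG1
  calc ∑ α, ‖⟪w, ψ α⟫_𝕜 * ⟪ψ α, b k⟫_𝕜‖
      = ‖⟪b k, w⟫_𝕜‖ * ∑ α, |overlapShare 𝕜 w (ψ α) (e α) (μ k)| := by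
        rw [Finset.mul_sum]
        refine Finset.sum_congr rfl fun α _ => ?_
        rw [inner_mul_inner_eq_mul_overlapShare hA (hb k) (hψ α) hkw, norm_mul,
          RCLike.norm_ofReal, norm_inner_symm]
    _ ≤ ‖⟪b k, w⟫_𝕜‖ * (2 * (1 - G)⁻¹ - ∑ α, overlapShare 𝕜 w (ψ α) (e α) (μ k)) := by
        gcongr
        refine sum_abs_le_of_subsingleton_pos (inv_nonneg.2 hG0.le)
          (fun α _ => overlapShare_le b hb (hψ α) (ψ.norm_eq_one α) hk hG hG1) ?_
        simpa using subsingleton_setOf_overlapShare_pos b ψ.orthonormal hb hψ hle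
    _ = ‖⟪b k, w⟫_𝕜‖ * ((1 + G) / (1 - G)) := by
        rw [sum_overlapShare_eq_one ψ hA hψ (hb k) hkw]
        field_simp
        ring

end RankOnePerturbation

theorem norm_inner_exp_smul_add_rankOne_apply_le {E ι : Type*} [NormedAddCommGroup E]
    [InnerProductSpace ℂ E] [Fintype ι] [DecidableEq ι] (b : OrthonormalBasis ι ℂ E)
    {A : E →L[ℂ] E} {μ : ι → ℝ} (hb : ∀ i, A (b i) = (μ i : ℂ) • b i)
    {k : ι} (hk : ∀ i, i ≠ k → μ i < μ k) (w : E) {G : ℝ}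
    (hG : G = ∑ i ∈ {k}ᶜ, ‖⟪b i, w⟫_ℂ‖ ^ 2 / (μ k - μ i)) (hG1 : G < 1) (t : ℝ) :
    ‖⟪w, NormedSpace.exp ((-(Complex.I * t)) • (A + rankOne ℂ w w)) (b k)⟫_ℂ‖ ≤
      ‖⟪b k, w⟫_ℂ‖ * ((1 + G) / (1 - G)) := by
  have := b.toBasis.finiteDimensional_of_finite
  have := FiniteDimensional.complete ℂ E
  rcases eq_or_ne ⟪b k, w⟫_ℂ 0 with hkw | hkw
  · have hwk : ⟪w, b k⟫_ℂ = 0 := inner_eq_zero_symm.1 hkw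
    have heig : ((-(Complex.I * t)) • (A + rankOne ℂ w w)) (b k) =
        (-(Complex.I * t) * μ k) • b k := by
      rw [_root_.smul_apply, _root_.add_apply, hb, InnerProductSpace.rankOne_apply, hwk, zero_smul,
        add_zero, smul_smul]
    rw [exp_apply_of_apply_eq_smul heig, inner_smul_right, hwk, hkw]
    simp
  · have hsymm : (A + rankOne ℂ w w).IsSymmetric :=
      (isSymmetric_of_apply_eq_ofReal_smul b hb).add (InnerProductSpace.isSymmetric_rankOne_self w)
    have hψ := hsymm.apply_eigenvectorBasis rfl
    exact (norm_inner_exp_smul_apply_le _ hψ w (b k) t).trans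
      (sum_norm_inner_mul_inner_le b _ hb hψ hk hkw hG hG1)

section EuclideanSpace

variable {𝕜 ι : Type*} [RCLike 𝕜] [Fintype ι] [DecidableEq ι]

open scoped Matrix.Norms.L2Operator in
theorem toEuclideanCLM_exp (M : Matrix ι ι 𝕜) :
    toEuclideanCLM (n := ι) (𝕜 := 𝕜) (NormedSpace.exp M) =
      NormedSpace.exp (toEuclideanCLM (n := ι) (𝕜 := 𝕜) M) := by
  have hcont : Continuous (toEuclideanCLM (n := ι) (𝕜 := 𝕜)) :=
    (toEuclideanCLM (n := ι) (𝕜 := 𝕜)).toAlgEquiv.toLinearMap.continuous_of_finiteDimensional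
  exact NormedSpace.map_exp_of_mem_ball (𝕂 := 𝕜) _ hcont M
    (by simp [NormedSpace.expSeries_radius_eq_top])

theorem toEuclideanCLM_vecMulVec_star (x y : ι → 𝕜) :
    toEuclideanCLM (n := ι) (𝕜 := 𝕜) (vecMulVec x (star y)) =
      rankOne 𝕜 (WithLp.toLp 2 x) (WithLp.toLp 2 y) := by
  ext z i
  simp [vecMulVec_mulVec, EuclideanSpace.inner_eq_star_dotProduct, dotProduct_comm, mul_comm]

theorem exists_orthonormalBasis_eq_toLp {v : ι → ι → 𝕜}
    (hv : ∀ i j, star (v i) ⬝ᵥ v j = if i = j then 1 else 0) :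
    ∃ b : OrthonormalBasis ι 𝕜 (EuclideanSpace 𝕜 ι), ∀ i, b i = WithLp.toLp 2 (v i) := by
  have horth : Orthonormal 𝕜 fun i => (WithLp.toLp 2 (v i) : EuclideanSpace 𝕜 ι) := by
    refine orthonormal_iff_ite.2 fun i j => ?_
    rw [EuclideanSpace.inner_toLp_toLp, dotProduct_comm, hv]
  have hspan := horth.linearIndependent.span_eq_top_of_card_eq_finrank' finrank_euclideanSpace.symm
  exact ⟨OrthonormalBasis.mk horth hspan.ge, fun i => by rw [OrthonormalBasis.coe_mk]⟩

end EuclideanSpace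

theorem amplitude_bound_large_r_general {ι : Type*} [Fintype ι] [DecidableEq ι]
    {H : Matrix ι ι ℂ} {v : ι → ι → ℂ} {lam : ι → ℝ}
    (hortho : ∀ i j, star (v i) ⬝ᵥ v j = if i = j then 1 else 0)
    (heig : ∀ i, H *ᵥ v i = (lam i : ℂ) • v i) {k : ι} (hlt : ∀ i, i ≠ k → lam i < lam k)
    (w : ι → ℂ) {S r : ℝ} (hS : S = ∑ i ∈ {k}ᶜ, ‖star (v i) ⬝ᵥ w‖ ^ 2 / (lam k - lam i))
    (hr : S < r) (t : ℝ) :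
    ‖star w ⬝ᵥ
        NormedSpace.exp ((-(Complex.I * t)) • ((r : ℂ) • H + vecMulVec w (star w))) *ᵥ v k‖ ≤
      ‖star (v k) ⬝ᵥ w‖ * ((r + S) / (r - S)) := by
  obtain ⟨b, hb⟩ := exists_orthonormalBasis_eq_toLp hortho
  have hS0 : 0 ≤ S := hS ▸ Finset.sum_nonneg fun i hi =>
    div_nonneg (sq_nonneg _) (sub_nonneg.2 (hlt i (by simpa using hi)).le)
  have hr0 : 0 < r := hS0.trans_lt hr
  have hrb (i : ι) : toEuclideanCLM (n := ι) (𝕜 := ℂ) ((r : ℂ) • H) (b i) =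
      ((r * lam i : ℝ) : ℂ) • b i := by
    rw [hb, toEuclideanCLM_toLp, smul_mulVec, heig, smul_smul, WithLp.toLp_smul,
      Complex.ofReal_mul]
  have hG : S / r = ∑ i ∈ {k}ᶜ, ‖⟪b i, WithLp.toLp 2 w⟫_ℂ‖ ^ 2 / (r * lam k - r * lam i) := by
    simp only [hb, EuclideanSpace.inner_toLp_toLp, dotProduct_comm w, hS, Finset.sum_div, div_div,
      mul_comm r, sub_mul]
  have hbound := norm_inner_exp_smul_add_rankOne_apply_le b hrb
    (fun i hi => mul_lt_mul_of_pos_left (hlt i hi) hr0) _ hG ((div_lt_one hr0).2 hr) t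
  have hconst : (1 + S / r) / (1 - S / r) = (r + S) / (r - S) := by field_simp
  rwa [← toEuclideanCLM_vecMulVec_star, ← map_add, ← map_smul, ← toEuclideanCLM_exp, hb, hconst,
    toEuclideanCLM_toLp, EuclideanSpace.inner_toLp_toLp, EuclideanSpace.inner_toLp_toLp,
    dotProduct_comm, dotProduct_comm w] at hbound

/-- Assume `λ_n = 1`, `a_n ≠ 0` with `ε = |a_n|² < 1`, and that
`H_search = r•H + |w⟩⟨w|` admits an orthonormal eigenbasis `ψ` with real eigenvalues `E` such
that `E α ≠ r·λ i` for all `α, i`. If `r > S₁`, then for every `t ∈ ℝ`,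
`|⟨w, exp(−i t H_search) v_n⟩| ≤ 2√ε·r/(r − S₁)`. -/
theorem amplitude_bound_large_r
    (n : ℕ) (H : Matrix (Fin (n + 1)) (Fin (n + 1)) ℂ) (hH : H.IsHermitian)
    (v : Fin (n + 1) → (Fin (n + 1) → ℂ)) (lam : Fin (n + 1) → ℝ)
    (hlam : Monotone lam) (hlam0 : ∀ i, 0 ≤ lam i)
    (hlast : lam (Fin.last n) = 1)
    (hlt : ∀ i, i ≠ Fin.last n → lam i < 1)
    (hortho : ∀ i j, star (v i) ⬝ᵥ v j = if i = j then 1 else 0)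
    (heig : ∀ i, H.mulVec (v i) = (lam i : ℂ) • v i)
    (w : Fin (n + 1) → ℂ) (hw : star w ⬝ᵥ w = 1)
    (a : Fin (n + 1) → ℂ) (ha : ∀ i, a i = star (v i) ⬝ᵥ w)
    (han : a (Fin.last n) ≠ 0)
    (ε : ℝ) (hε : ε = ‖a (Fin.last n)‖ ^ 2) (hε1 : ε < 1)
    (S1 : ℝ)
    (hS1 : S1 = ∑ i : Fin n, ‖a i.castSucc‖ ^ 2 / (1 - lam i.castSucc))
    (r : ℝ) (hr : S1 < r)
    (Hs : Matrix (Fin (n + 1)) (Fin (n + 1)) ℂ)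
    (hHs : Hs = (r : ℂ) • H + Matrix.vecMulVec w (star w))
    (ψ : Fin (n + 1) → (Fin (n + 1) → ℂ)) (E : Fin (n + 1) → ℝ)
    (horthoψ : ∀ α β, star (ψ α) ⬝ᵥ ψ β = if α = β then 1 else 0)
    (heigψ : ∀ α, Hs.mulVec (ψ α) = (E α : ℂ) • ψ α)
    (hEne : ∀ α i, E α ≠ r * lam i) :
    ∀ t : ℝ,
      ‖star w ⬝ᵥ (NormedSpace.exp ((-(Complex.I * (t : ℂ))) • Hs)).mulVec (v (Fin.last n))‖ ≤
        2 * Real.sqrt ε * r / (r - S1) := by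
  intro t
  subst hHs hε
  have hS : S1 = ∑ i ∈ {Fin.last n}ᶜ, ‖star (v i) ⬝ᵥ w‖ ^ 2 / (lam (Fin.last n) - lam i) := by
    simp only [sum_compl_singleton_last, hS1, ha, hlast]
  refine (amplitude_bound_large_r_general hortho heig (hlast ▸ hlt) w hS hr t).trans ?_
  have hconst : (r + S1) / (r - S1) ≤ 2 * r / (r - S1) :=
    div_le_div_of_nonneg_right (by linarith) (sub_pos.2 hr).le
  rw [ha, Real.sqrt_sq (norm_nonneg _), mul_comm 2, mul_assoc, mul_div_assoc]
  exact mul_le_mul_of_nonneg_left hconst (norm_nonneg _)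
end

section
/- Let H be an n×n Hermitian matrix, V a linear subspace of the eigenspace {x : H x = x}, w ∈ ℂ^n a unit vector whose orthogonal projection P_V w onto V is nonzero, and set u = P_V w/‖P_V w‖. Then for every r ∈ ℝ, every v ∈ V and every t ∈ ℝ, ⟨w, exp(−i t H_search) v⟩ = ⟨u, v⟩ · ⟨w, exp(−i t H_search) u⟩, where H_search = r·H + P_w. -/
open Matrix BigOperators

/-!
Split `x ∈ V` as `⟨u, x⟩ u + y`. The remainder `y ∈ V` is orthogonal to `u`, hence to `P_V w`, hence
to `w`. The rank-one term `|w⟩⟨w|` therefore annihilates `y`, which makes `y` an eigenvector of the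
search Hamiltonian: evolution only rescales it, so it never acquires an amplitude on `w`.
-/

section Exponential

variable {ι : Type*} [Fintype ι] [DecidableEq ι]

theorem pow_mulVec_of_mulVec_eq_smul {R : Type*} [CommSemiring R] {A : Matrix ι ι R} {μ : R}
    {y : ι → R} (hy : A *ᵥ y = μ • y) (k : ℕ) : A ^ k *ᵥ y = μ ^ k • y := by
  induction k with
  | zero => simp
  | succ k ih => rw [pow_succ, ← mulVec_mulVec, hy, mulVec_smul, ih, smul_smul, pow_succ']

theorem hasSum_matrix_exp {𝔸 : Type*} [NormedRing 𝔸] [NormedAlgebra ℚ 𝔸] [CompleteSpace 𝔸]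
    (A : Matrix ι ι 𝔸) :
    HasSum (fun k : ℕ => (k.factorial⁻¹ : ℚ) • A ^ k) (NormedSpace.exp A) := by
  let _ : NormedRing (Matrix ι ι 𝔸) := Matrix.linftyOpNormedRing
  let _ : NormedAlgebra ℚ (Matrix ι ι 𝔸) := Matrix.linftyOpNormedAlgebra
  -- Explicit because instance search would use the entrywise uniformity, equal only by unfolding.
  have _ : @CompleteSpace (Matrix ι ι 𝔸) PseudoMetricSpace.toUniformSpace :=
    inferInstanceAs (CompleteSpace (ι → ι → 𝔸))
  exact NormedSpace.exp_series_hasSum_exp' (𝕂 := ℚ) A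

variable {𝔸 : Type*} [NormedCommRing 𝔸] [NormedAlgebra ℚ 𝔸] [CompleteSpace 𝔸]

theorem exp_mulVec_of_mulVec_eq_smul {A : Matrix ι ι 𝔸} {μ : 𝔸} {y : ι → 𝔸}
    (hy : A *ᵥ y = μ • y) : NormedSpace.exp A *ᵥ y = NormedSpace.exp μ • y := by
  have hasSum_mulVec := (hasSum_matrix_exp A).map (mulVec.addMonoidHomLeft y)
    (continuous_id.matrix_mulVec continuous_const)
  have hasSum_smul := (NormedSpace.exp_series_hasSum_exp' (𝕂 := ℚ) μ).smul_const y
  refine hasSum_mulVec.unique (hasSum_smul.congr_fun fun k => ?_)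
  simp [mulVec.addMonoidHomLeft, smul_mulVec, pow_mulVec_of_mulVec_eq_smul hy]

theorem dotProduct_exp_smul_add_vecMulVec_mulVec_eq_zero {A : Matrix ι ι 𝔸} {μ : 𝔸}
    {a b y : ι → 𝔸} (hy : A *ᵥ y = μ • y) (hby : b ⬝ᵥ y = 0) (c : 𝔸) :
    b ⬝ᵥ NormedSpace.exp (c • (A + vecMulVec a b)) *ᵥ y = 0 := by
  have eigenvector : (c • (A + vecMulVec a b)) *ᵥ y = (c * μ) • y := by
    rw [smul_mulVec, add_mulVec, vecMulVec_mulVec, hby, MulOpposite.op_zero, zero_smul, add_zero,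
      hy, smul_smul]
  rw [exp_mulVec_of_mulVec_eq_smul eigenvector, dotProduct_smul, hby, smul_zero]

end Exponential

section DotProduct

variable {ι : Type*} [Fintype ι]

theorem star_dotProduct_eq_of_star_dotProduct_sub_eq_zero {R : Type*} [NonUnitalRing R]
    [StarRing R] {w p x : ι → R} (h : star x ⬝ᵥ (w - p) = 0) : star w ⬝ᵥ x = star p ⬝ᵥ x := by
  rw [← sub_eq_zero, ← sub_dotProduct, ← star_sub, star_dotProduct, h, star_zero]

theorem star_dotProduct_sub_smul_self_eq_zero {R : Type*} [CommRing R] [StarRing R] {u : ι → R}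
    (hu : star u ⬝ᵥ u = 1) (x : ι → R) : star u ⬝ᵥ (x - (star u ⬝ᵥ x) • u) = 0 := by
  rw [dotProduct_sub, dotProduct_smul, hu, smul_eq_mul, mul_one, sub_self]

variable {𝕜 : Type*} [RCLike 𝕜]

open scoped ComplexOrder in
theorem sqrt_re_star_dotProduct_self_mul_self (v : ι → 𝕜) :
    (√(RCLike.re (star v ⬝ᵥ v)) : 𝕜) * (√(RCLike.re (star v ⬝ᵥ v)) : 𝕜) = star v ⬝ᵥ v := by
  obtain ⟨s, hs, hsv⟩ := RCLike.nonneg_iff_exists_ofReal.mp (dotProduct_star_self_nonneg v)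
  rw [← hsv, RCLike.ofReal_re, ← RCLike.ofReal_mul, Real.mul_self_sqrt hs]

open scoped ComplexOrder in
theorem sqrt_re_star_dotProduct_self_ne_zero {v : ι → 𝕜} (hv : v ≠ 0) :
    (√(RCLike.re (star v ⬝ᵥ v)) : 𝕜) ≠ 0 := by
  have norm_sq_ne_zero : star v ⬝ᵥ v ≠ 0 := dotProduct_star_self_eq_zero.not.mpr hv
  rw [← sqrt_re_star_dotProduct_self_mul_self v] at norm_sq_ne_zero
  exact left_ne_zero_of_mul norm_sq_ne_zero

theorem star_dotProduct_self_inv_sqrt_smul {v : ι → 𝕜} (hv : v ≠ 0) :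
    star ((√(RCLike.re (star v ⬝ᵥ v)) : 𝕜)⁻¹ • v) ⬝ᵥ
      ((√(RCLike.re (star v ⬝ᵥ v)) : 𝕜)⁻¹ • v) = 1 := by
  have norm_ne_zero := sqrt_re_star_dotProduct_self_ne_zero hv
  have norm_mul_self := sqrt_re_star_dotProduct_self_mul_self v
  set s := √(RCLike.re (star v ⬝ᵥ v))
  rw [star_smul, smul_dotProduct, dotProduct_smul, ← norm_mul_self]
  simp [norm_ne_zero]

end DotProduct

section Factorization

variable {ι : Type*} [Fintype ι] [DecidableEq ι]

theorem star_dotProduct_exp_mulVec_eq_mul_of_unit {𝔸 : Type*} [NormedCommRing 𝔸]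
    [NormedAlgebra ℚ 𝔸] [CompleteSpace 𝔸] [StarRing 𝔸] {A : Matrix ι ι 𝔸} {μ s : 𝔸}
    {V : Submodule 𝔸 (ι → 𝔸)} (hV : ∀ x ∈ V, A *ᵥ x = μ • x) {w u : ι → 𝔸} (huV : u ∈ V)
    (hu : star u ⬝ᵥ u = 1) (hperp : ∀ x ∈ V, star x ⬝ᵥ (w - s • u) = 0) (a : ι → 𝔸) (c : 𝔸)
    {x : ι → 𝔸} (hx : x ∈ V) :
    star w ⬝ᵥ NormedSpace.exp (c • (A + vecMulVec a (star w))) *ᵥ x =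
      (star u ⬝ᵥ x) * (star w ⬝ᵥ NormedSpace.exp (c • (A + vecMulVec a (star w))) *ᵥ u) := by
  have remainder_mem : x - (star u ⬝ᵥ x) • u ∈ V := V.sub_mem hx (V.smul_mem _ huV)
  have remainder_orthogonal : star w ⬝ᵥ (x - (star u ⬝ᵥ x) • u) = 0 := by
    rw [star_dotProduct_eq_of_star_dotProduct_sub_eq_zero (hperp _ remainder_mem), star_smul,
      smul_dotProduct, star_dotProduct_sub_smul_self_eq_zero hu, smul_zero]
  have amplitude_remainder := dotProduct_exp_smul_add_vecMulVec_mulVec_eq_zero (a := a)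
    (hV _ remainder_mem) remainder_orthogonal c
  rwa [mulVec_sub, mulVec_smul, dotProduct_sub, dotProduct_smul, smul_eq_mul, sub_eq_zero]
    at amplitude_remainder

theorem amplitude_factorization_through_projection_general {𝕜 : Type*} [RCLike 𝕜]
    {A : Matrix ι ι 𝕜} {μ : 𝕜} {V : Submodule 𝕜 (ι → 𝕜)} (hV : ∀ x ∈ V, A *ᵥ x = μ • x)
    {w pw u : ι → 𝕜} (hpwV : pw ∈ V) (hperp : ∀ x ∈ V, star x ⬝ᵥ (w - pw) = 0) (hpw0 : pw ≠ 0)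
    (hu : u = (√(RCLike.re (star pw ⬝ᵥ pw)) : 𝕜)⁻¹ • pw) (c : 𝕜) {x : ι → 𝕜} (hx : x ∈ V) :
    star w ⬝ᵥ NormedSpace.exp (c • (A + vecMulVec w (star w))) *ᵥ x =
      (star u ⬝ᵥ x) * (star w ⬝ᵥ NormedSpace.exp (c • (A + vecMulVec w (star w))) *ᵥ u) := by
  have huV : u ∈ V := hu ▸ V.smul_mem _ hpwV
  have hu_unit : star u ⬝ᵥ u = 1 := hu ▸ star_dotProduct_self_inv_sqrt_smul hpw0
  have hpw : pw = (√(RCLike.re (star pw ⬝ᵥ pw)) : 𝕜) • u := by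
    rw [hu, smul_inv_smul₀ (sqrt_re_star_dotProduct_self_ne_zero hpw0)]
  exact star_dotProduct_exp_mulVec_eq_mul_of_unit hV huV hu_unit (hpw ▸ hperp) w c hx

end Factorization

/-- Let `H` be Hermitian, `V` a subspace of the eigenspace `{x : H x = x}`,
`w` a unit vector whose orthogonal projection `pw` onto `V` (characterized by `pw ∈ V` and
`w − pw ⊥ V`) is nonzero, and `u = pw/‖pw‖`. Then for every `r ∈ ℝ`, every `x ∈ V` and every
`t ∈ ℝ`, `⟨w, exp(−i t H_search) x⟩ = ⟨u, x⟩·⟨w, exp(−i t H_search) u⟩` where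
`H_search = r•H + |w⟩⟨w|`. -/
theorem amplitude_factorization_through_projection
    (n : ℕ) (H : Matrix (Fin n) (Fin n) ℂ) (hH : H.IsHermitian)
    (V : Submodule ℂ (Fin n → ℂ)) (hV : ∀ x ∈ V, H.mulVec x = x)
    (w : Fin n → ℂ) (hw : star w ⬝ᵥ w = 1)
    (pw : Fin n → ℂ) (hpwV : pw ∈ V)
    (hperp : ∀ x ∈ V, star x ⬝ᵥ (w - pw) = 0)
    (hpw0 : pw ≠ 0)
    (u : Fin n → ℂ)
    (hu : u = ((Real.sqrt ((star pw ⬝ᵥ pw).re) : ℂ))⁻¹ • pw) :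
    ∀ (r : ℝ) (x : Fin n → ℂ), x ∈ V → ∀ t : ℝ,
      star w ⬝ᵥ (NormedSpace.exp ((-(Complex.I * (t : ℂ))) •
          ((r : ℂ) • H + Matrix.vecMulVec w (star w)))).mulVec x =
        (star u ⬝ᵥ x) *
          (star w ⬝ᵥ (NormedSpace.exp ((-(Complex.I * (t : ℂ))) •
            ((r : ℂ) • H + Matrix.vecMulVec w (star w)))).mulVec u) := by
  intro r x hx t
  exact amplitude_factorization_through_projection_general (μ := (r : ℂ))
    (fun y hy => by rw [smul_mulVec, hV y hy]) hpwV hperp hpw0 hu _ hx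
end
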